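/- Let k, l be natural numbers and let N = C(k+l+4, l+2) + 1, where C(a, b) is the binomial coefficient. Let χ be a function from the 3-element subsets of Fin N to Bool such that for all indices i < j < m < p, if χ{i, j, m} = χ{j, m, p} then χ{i, m, p} = χ{i, j, p} = χ{i, j, m}. Then there exists either a subset S of Fin N with |S| = l + 1 such that χ assigns the value false to every 3-element subset of S, or a subset T of Fin N with |T| = k + 1 such that χ assigns the value true to every 3-element subset of T. -/

import Mathlib

open Set

noncomputable section

/-- The Euclidean plane. -/
abbrev Plane : Type := EuclideanSpace ℝ (Fin 2)

/-- The 2×2 determinant of two plane vectors. -/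
def det2 (u v : Plane) : ℝ := u 0 * v 1 - u 1 * v 0

/-- A convex body in the plane: nonempty, compact and convex. -/
def ConvexBody2 (A : Set Plane) : Prop := A.Nonempty ∧ IsCompact A ∧ Convex ℝ A

/-- A family of sets is in convex position if removing any member changes the
convex hull of the union of the family. -/
def ConvexPos (F : Set (Set Plane)) : Prop :=
  ∀ A ∈ F, convexHull ℝ (⋃₀ F) ≠ convexHull ℝ (⋃₀ (F \ {A}))

/-- A family is in general position if every 3-element subfamily is in convex position. -/
def GenPos (F : Set (Set Plane)) : Prop :=
  ∀ G ⊆ F, G.ncard = 3 → ConvexPos G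

/-- Two sets are noncrossing if both set differences are connected. -/
def NoncrossingPair (A B : Set Plane) : Prop := IsConnected (A \ B) ∧ IsConnected (B \ A)

/-- Two convex bodies are tangent if they intersect but their interiors are disjoint. -/
def TangentBodies (A B : Set Plane) : Prop :=
  (A ∩ B).Nonempty ∧ interior A ∩ interior B = ∅

/-- The line `{x | f x = c}` (for `f ≠ 0`) is tangent to `A`:
it meets `A` and `A` lies in one of the two closed half-planes it bounds. -/
def TangentLineTo (f : Plane →ₗ[ℝ] ℝ) (c : ℝ) (A : Set Plane) : Prop :=
  (∃ x ∈ A, f x = c) ∧ ((∀ x ∈ A, f x ≤ c) ∨ (∀ x ∈ A, c ≤ f x))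

/-- No line is tangent to three distinct members of the family. -/
def NoTripleTangentLine (F : Set (Set Plane)) : Prop :=
  ∀ f : Plane →ₗ[ℝ] ℝ, f ≠ 0 → ∀ c : ℝ, ∀ A ∈ F, ∀ B ∈ F, ∀ C ∈ F,
    A ≠ B → B ≠ C → A ≠ C →
    ¬ (TangentLineTo f c A ∧ TangentLineTo f c B ∧ TangentLineTo f c C)

/-- The ordered triple `(A₁, A₂, A₃)` is counterclockwise oriented. -/
def CCWOriented (A₁ A₂ A₃ : Set Plane) : Prop :=
  ∃ a₁ ∈ A₁ ∩ frontier (convexHull ℝ (A₁ ∪ A₂ ∪ A₃)),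
  ∃ a₂ ∈ A₂ ∩ frontier (convexHull ℝ (A₁ ∪ A₂ ∪ A₃)),
  ∃ a₃ ∈ A₃ ∩ frontier (convexHull ℝ (A₁ ∪ A₂ ∪ A₃)),
    0 < det2 (a₂ - a₁) (a₃ - a₁)

/-- The ordered triple `(A₁, A₂, A₃)` is clockwise oriented. -/
def CWOriented (A₁ A₂ A₃ : Set Plane) : Prop :=
  ∃ a₁ ∈ A₁ ∩ frontier (convexHull ℝ (A₁ ∪ A₂ ∪ A₃)),
  ∃ a₂ ∈ A₂ ∩ frontier (convexHull ℝ (A₁ ∪ A₂ ∪ A₃)),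
  ∃ a₃ ∈ A₃ ∩ frontier (convexHull ℝ (A₁ ∪ A₂ ∪ A₃)),
    det2 (a₂ - a₁) (a₃ - a₁) < 0

/-- An affine line in the plane: an affine subspace with 1-dimensional direction. -/
def IsLine (L : AffineSubspace ℝ Plane) : Prop := Module.finrank ℝ L.direction = 1

/-- `L` is a transversal line of the family `F`. -/
def TransversalLine (L : AffineSubspace ℝ Plane) (F : Set (Set Plane)) : Prop :=
  IsLine L ∧ ∀ A ∈ F, ((L : Set Plane) ∩ A).Nonempty

/-!
Fix a finite set `A` and let `E` consist of the right ends of the cliques of the first colour with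
`a + 2` elements. Deleting `E` from `A` destroys all those cliques, while a clique `T` of the second
colour inside `E` has as its left end `e` the right end of a clique `S` of the first colour. Let `s`
be the predecessor of `e` in `S` and `t` its successor in `T`. Whichever colour `{s, e, t}` has,
transitivity extends `S` by `t` or `T` by `s`. So Pascal's rule carries the induction: either
`A \ E` or `E` is large enough for the induction hypothesis.
-/

section Preorder

variable {α : Type*} [Preorder α] {R : α → α → α → Prop}

/-- A ternary relation is transitive if two increasing triples of the relation that overlap in two
consecutive elements, `i < j < m` and `j < m < p`, force the other two triples of `i < j < m < p`
into the relation. Cups (and caps) of points in the plane are the motivating example. -/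
def IsTripleTransitive (R : α → α → α → Prop) : Prop :=
  ∀ ⦃i j m p : α⦄, i < j → j < m → m < p → R i j m → R j m p → R i m p ∧ R i j p

/-- A clique of a ternary relation: a set all of whose increasing triples satisfy the relation. -/
def IsTripleClique (R : α → α → α → Prop) (S : Set α) : Prop :=
  ∀ ⦃x⦄, x ∈ S → ∀ ⦃y⦄, y ∈ S → ∀ ⦃z⦄, z ∈ S → x < y → y < z → R x y z

lemma IsTripleClique.of_card_le_two {S : Finset α} (hS : S.card ≤ 2) : IsTripleClique R S :=
  fun _ hx _ hy _ hz hxy hyz => absurd hS <| not_le.2 <|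
    Finset.two_lt_card.2 ⟨_, hx, _, hy, _, hz, hxy.ne, (hxy.trans hyz).ne, hyz.ne⟩

lemma exists_isTripleClique_card_eq_two (R : α → α → α → Prop) {A : Finset α} (hA : 1 < A.card) :
    ∃ S ⊆ A, S.card = 2 ∧ IsTripleClique R S :=
  let ⟨S, hSA, hS⟩ := Finset.exists_subset_card_eq hA
  ⟨S, hSA, hS, .of_card_le_two hS.le⟩

lemma IsTripleTransitive.dual (hR : IsTripleTransitive R) :
    IsTripleTransitive (α := αᵒᵈ) fun x y z => R z y x :=
  fun _ _ _ _ hij hjm hmp hijm hjmp => (hR hmp hjm hij hjmp hijm).symm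

lemma IsTripleClique.dual {S : Set α} (hS : IsTripleClique R S) :
    IsTripleClique (α := αᵒᵈ) (fun x y z => R z y x) S :=
  fun _ hx _ hy _ hz hxy hyz => hS hz hy hx hyz hxy

end Preorder

section PartialOrder

variable {α : Type*} [PartialOrder α] {R : α → α → α → Prop} {S : Set α} {e f t : α}

lemma IsTripleClique.insert_of_isGreatest (hR : IsTripleTransitive R)
    (hS : IsTripleClique R S) (he : IsGreatest S e) (hf : IsGreatest (S \ {e}) f) (het : e < t)
    (hfet : R f e t) : IsTripleClique R (insert t S) := by
  have hfe : f < e := (he.2 hf.1.1).lt_of_ne hf.1.2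
  have below_e : ∀ y ∈ S, y < e → R y e t := fun y hy hye => by
    obtain rfl | hyf := (hf.2 ⟨hy, hye.ne⟩).eq_or_lt
    · exact hfet
    · exact (hR hyf hfe het (hS hy hf.1.1 he.1 hyf hfe) hfet).1
  have pairs : ∀ x ∈ S, ∀ y ∈ S, x < y → R x y t := fun x hx y hy hxy => by
    obtain rfl | hye := (he.2 hy).eq_or_lt
    · exact below_e x hx hxy
    · exact (hR hxy hye het (hS hx hy he.1 hxy hye) (below_e y hy hye)).2
  have mem_of_lt : ∀ ⦃x z⦄, x ∈ insert t S → z ∈ insert t S → x < z → x ∈ S := by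
    rintro x z (rfl | hx) (rfl | hz) hxz
    · exact absurd hxz (lt_irrefl _)
    · exact absurd ((het.trans hxz).trans_le (he.2 hz)) (lt_irrefl _)
    · exact hx
    · exact hx
  intro x hx y hy z hz hxy hyz
  have hxS := mem_of_lt hx hy hxy
  have hyS := mem_of_lt hy hz hyz
  obtain rfl | hzS := hz
  · exact pairs x hxS y hyS hxy
  · exact hS hxS hyS hzS hxy hyz

lemma IsTripleClique.insert_of_isLeast (hR : IsTripleTransitive R)
    (hS : IsTripleClique R S) (he : IsLeast S e) (hf : IsLeast (S \ {e}) f) (hte : t < e)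
    (htef : R t e f) : IsTripleClique R (insert t S) :=
  (IsTripleClique.insert_of_isGreatest (α := αᵒᵈ) hR.dual hS.dual he hf hte htef).dual

end PartialOrder

section LinearOrder

variable {α : Type*} [LinearOrder α] {R Q : α → α → α → Prop} {S T A : Finset α} {e : α}

lemma exists_isGreatest_sdiff_singleton (hS : 1 < S.card) (e : α) :
    ∃ f, IsGreatest ((S : Set α) \ {e}) f := by
  rw [← Finset.coe_erase]
  exact ⟨_, (S.erase e).isGreatest_max' ((Finset.one_lt_card_iff_nontrivial.1 hS).erase_nonempty)⟩

lemma exists_isLeast_sdiff_singleton (hS : 1 < S.card) (e : α) :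
    ∃ f, IsLeast ((S : Set α) \ {e}) f :=
  exists_isGreatest_sdiff_singleton (α := αᵒᵈ) hS e

lemma exists_isTripleClique_card_succ (hR : IsTripleTransitive R) (hQ : IsTripleTransitive Q)
    (hRQ : ∀ x y z, x < y → y < z → R x y z ∨ Q x y z)
    (hS : IsTripleClique R S) (hT : IsTripleClique Q T) (hS₂ : 1 < S.card) (hT₂ : 1 < T.card)
    (hSe : IsGreatest (S : Set α) e) (hTe : IsLeast (T : Set α) e) :
    (∃ S' ⊆ S ∪ T, S'.card = S.card + 1 ∧ IsTripleClique R S') ∨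
      (∃ T' ⊆ S ∪ T, T'.card = T.card + 1 ∧ IsTripleClique Q T') := by
  obtain ⟨s, hs⟩ := exists_isGreatest_sdiff_singleton hS₂ e
  obtain ⟨t, ht⟩ := exists_isLeast_sdiff_singleton hT₂ e
  have hse : s < e := (hSe.2 hs.1.1).lt_of_ne hs.1.2
  have het : e < t := (hTe.2 ht.1.1).lt_of_ne' ht.1.2
  rcases hRQ s e t hse het with hcol | hcol
  · refine .inl ⟨insert t S, ?_, ?_, ?_⟩
    · exact Finset.insert_subset (Finset.mem_union_right _ ht.1.1) Finset.subset_union_left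
    · exact Finset.card_insert_of_notMem fun htS => (hSe.2 htS).not_gt het
    · rw [Finset.coe_insert]
      exact hS.insert_of_isGreatest hR hSe hs het hcol
  · refine .inr ⟨insert s T, ?_, ?_, ?_⟩
    · exact Finset.insert_subset (Finset.mem_union_left _ hs.1.1) Finset.subset_union_right
    · exact Finset.card_insert_of_notMem fun hsT => (hTe.2 hsT).not_gt hse
    · rw [Finset.coe_insert]
      exact hT.insert_of_isLeast hQ hTe ht hse hcol

theorem exists_isTripleClique_of_choose_lt_card
    (hR : IsTripleTransitive R) (hQ : IsTripleTransitive Q)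
    (hRQ : ∀ x y z, x < y → y < z → R x y z ∨ Q x y z) {a b : ℕ}
    (hA : (a + b).choose a < A.card) :
    (∃ S ⊆ A, S.card = a + 2 ∧ IsTripleClique R S) ∨
      (∃ T ⊆ A, T.card = b + 2 ∧ IsTripleClique Q T) := by
  classical
  induction a generalizing b A with
  | zero => exact .inl (exists_isTripleClique_card_eq_two R (by simpa using hA))
  | succ a iha =>
    induction b generalizing A with
    | zero => exact .inr (exists_isTripleClique_card_eq_two Q (by simpa using hA))
    | succ b ihb =>
      let E := A.filter fun e =>
        ∃ S ⊆ A, S.card = a + 2 ∧ IsTripleClique R S ∧ IsGreatest (S : Set α) e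
      have hEA : E ⊆ A := Finset.filter_subset _ _
      have pascal : (a + 1 + (b + 1)).choose (a + 1) =
          (a + (b + 1)).choose a + (a + 1 + b).choose (a + 1) := by
        rw [← add_assoc, Nat.choose_succ_succ, add_right_comm a 1 b, add_assoc a b 1]
      have large :
          (a + (b + 1)).choose a < (A \ E).card ∨ (a + 1 + b).choose (a + 1) < E.card := by
        have := Finset.card_sdiff_add_card_eq_card hEA
        omega
      rcases large with hAE | hE
      · refine (iha hAE).imp (fun ⟨S, hSAE, hS, hSR⟩ => ?_)
          fun ⟨T, hTAE, hT⟩ => ⟨T, hTAE.trans Finset.sdiff_subset, hT⟩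
        have hmax := S.isGreatest_max' (Finset.card_pos.1 (by omega))
        have hmem := Finset.mem_sdiff.1 (hSAE hmax.1)
        exact absurd (Finset.mem_filter.2
          ⟨hmem.1, S, hSAE.trans Finset.sdiff_subset, hS, hSR, hmax⟩) hmem.2
      · rcases ihb hE with ⟨S, hSE, hS⟩ | ⟨T, hTE, hT, hTQ⟩
        · exact .inl ⟨S, hSE.trans hEA, hS⟩
        have hmin := T.isLeast_min' (Finset.card_pos.1 (by omega))
        obtain ⟨S, hSA, hS, hSR, hmax⟩ := (Finset.mem_filter.1 (hTE hmin.1)).2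
        have hST : S ∪ T ⊆ A := Finset.union_subset hSA (hTE.trans hEA)
        refine (exists_isTripleClique_card_succ
            hR hQ hRQ hSR hTQ (by omega) (by omega) hmax hmin).imp
          (fun ⟨S', hS', hcard, hS'R⟩ => ⟨S', hS'.trans hST, by omega, hS'R⟩)
          (fun ⟨T', hT', hcard, hT'Q⟩ => ⟨T', hT'.trans hST, by omega, hT'Q⟩)

end LinearOrder

section Colouring

variable {α κ : Type*} {χ : Finset α → κ} {c : κ} {A : Finset α}

/-- A set is monochromatic of colour `c` for a colouring of finite sets if all its 3-element
subsets have colour `c`; the colours of sets of other sizes play no role. -/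
def IsTripleMonochromatic (χ : Finset α → κ) (c : κ) (S : Finset α) : Prop :=
  ∀ T ⊆ S, T.card = 3 → χ T = c

lemma exists_isTripleMonochromatic_of_le {m n : ℕ} (hnm : n ≤ m)
    (h : ∃ S ⊆ A, S.card = m ∧ IsTripleMonochromatic χ c S) :
    ∃ S : Finset α, S.card = n ∧ IsTripleMonochromatic χ c S := by
  obtain ⟨S, -, rfl, hS⟩ := h
  obtain ⟨S', hS'S, hS'⟩ := Finset.exists_subset_card_eq hnm
  exact ⟨S', hS', fun T hT => hS T (hT.trans hS'S)⟩

variable [LinearOrder α]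

lemma exists_lt_lt_eq_of_card_eq_three {T : Finset α} (hT : T.card = 3) :
    ∃ x y z, x < y ∧ y < z ∧ T = {x, y, z} := by
  let enum := T.orderEmbOfFin hT
  refine ⟨enum 0, enum 1, enum 2, enum.strictMono (by decide), enum.strictMono (by decide), ?_⟩
  ext x
  rw [← Finset.mem_coe, ← T.range_orderEmbOfFin hT, Set.mem_range]
  simp [enum, Fin.exists_fin_succ, eq_comm]

lemma IsTripleClique.isTripleMonochromatic {S : Finset α}
    (hS : IsTripleClique (fun x y z => χ {x, y, z} = c) S) : IsTripleMonochromatic χ c S := by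
  intro T hTS hT
  obtain ⟨x, y, z, hxy, hyz, rfl⟩ := exists_lt_lt_eq_of_card_eq_three hT
  simp only [Finset.insert_subset_iff, Finset.singleton_subset_iff] at hTS
  exact hS hTS.1 hTS.2.1 hTS.2.2 hxy hyz

theorem erdos_szekeres_hypergraph_general {χ : Finset α → Bool}
    (hχ : ∀ i j m p : α, i < j → j < m → m < p →
      χ {i, j, m} = χ {j, m, p} →
      χ {i, m, p} = χ {i, j, m} ∧ χ {i, j, p} = χ {i, j, m})
    {a b : ℕ} (hA : (a + b).choose a < A.card) :
    (∃ S ⊆ A, S.card = a + 2 ∧ IsTripleMonochromatic χ false S) ∨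
      (∃ T ⊆ A, T.card = b + 2 ∧ IsTripleMonochromatic χ true T) := by
  have transitive (c : Bool) : IsTripleTransitive fun x y z => χ {x, y, z} = c := by
    rintro i j m p hij hjm hmp rfl hjmp
    exact hχ i j m p hij hjm hmp hjmp.symm
  have dichotomy (x y z : α) (_ : x < y) (_ : y < z) : χ {x, y, z} = false ∨ χ {x, y, z} = true :=
    (Bool.eq_false_or_eq_true _).symm
  exact (exists_isTripleClique_of_choose_lt_card
      (transitive false) (transitive true) dichotomy hA).imp
    (fun ⟨S, hSA, hS, hS₀⟩ => ⟨S, hSA, hS, hS₀.isTripleMonochromatic⟩)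
    (fun ⟨T, hTA, hT, hT₁⟩ => ⟨T, hTA, hT, hT₁.isTripleMonochromatic⟩)

end Colouring

/-- Erdős–Szekeres cup-cap lemma, hypergraph version. -/
theorem erdos_szekeres_hypergraph (k l : ℕ)
    (N : ℕ) (hN : N = Nat.choose (k + l + 4) (l + 2) + 1)
    (χ : Finset (Fin N) → Bool)
    (hχ : ∀ i j m p : Fin N, i < j → j < m → m < p →
      χ {i, j, m} = χ {j, m, p} →
      χ {i, m, p} = χ {i, j, m} ∧ χ {i, j, p} = χ {i, j, m}) :
    (∃ S : Finset (Fin N), S.card = l + 1 ∧ ∀ T ⊆ S, T.card = 3 → χ T = false) ∨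
    (∃ T : Finset (Fin N), T.card = k + 1 ∧ ∀ U ⊆ T, U.card = 3 → χ U = true) := by
  have hcard : (l + 2 + (k + 2)).choose (l + 2) < (Finset.univ : Finset (Fin N)).card := by
    rw [Finset.card_fin, hN, show l + 2 + (k + 2) = k + l + 4 by omega]
    exact Nat.lt_succ_self _
  exact (erdos_szekeres_hypergraph_general hχ hcard).imp
    (exists_isTripleMonochromatic_of_le (by omega)) (exists_isTripleMonochromatic_of_le (by omega))
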